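/- Let A be an n×n real matrix and λ ≠ 0 an eigenvalue of A with algebraic multiplicity k ≥ 1. Then there exists an index i such that the algebraic multiplicity of λ as an eigenvalue of DᵢA is strictly less than k, where Dᵢ is the diagonal matrix with -1 in position (i,i) and 1 elsewhere on the diagonal. -/

import Mathlib

open Polynomial in
lemma derivative_det_rows {n : ℕ} (M : Matrix (Fin n) (Fin n) ℝ[X]) :
    derivative M.det = ∑ i, (M.updateRow i (fun j => derivative (M i j))).det := by
  simp_rw [← Matrix.det_transpose M, ← Matrix.det_transpose (Matrix.updateRow M _ _),
    Matrix.det_apply, derivative_sum]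
  rw [Finset.sum_comm]
  refine Finset.sum_congr rfl fun σ _ => ?_
  rw [← Finset.smul_sum]
  have h : ∀ p : ℝ[X], derivative (Equiv.Perm.sign σ • p) =
      Equiv.Perm.sign σ • derivative p := by
    intro p
    rcases Int.units_eq_one_or (Equiv.Perm.sign σ) with h | h <;> simp [h]
  rw [h, derivative_prod_finset]
  congr 1
  refine Finset.sum_congr rfl fun i _ => ?_
  rw [← Finset.mul_prod_erase Finset.univ _ (Finset.mem_univ i), mul_comm]
  congr 1
  · simp
  · refine Finset.prod_congr rfl fun j hj => ?_
    simp [Matrix.updateRow_ne (Finset.ne_of_mem_erase hj)]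

open Polynomial in
lemma derivative_charpoly_rows {n : ℕ} (A : Matrix (Fin n) (Fin n) ℝ) :
    derivative A.charpoly = ∑ i, (A.charmatrix.updateRow i (Pi.single i 1)).det := by
  rw [Matrix.charpoly, derivative_det_rows]
  refine Finset.sum_congr rfl fun i _ => ?_
  congr 2
  ext1 j
  by_cases h : i = j
  · subst h; simp [Matrix.charmatrix_apply_eq]
  · simp [Matrix.charmatrix_apply_ne _ _ _ h, Pi.single_eq_of_ne (Ne.symm h)]

open Polynomial in
lemma charpoly_flip_add {n : ℕ} (A : Matrix (Fin n) (Fin n) ℝ) (i : Fin n) :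
    (Matrix.diagonal (fun j => if j = i then (-1 : ℝ) else 1) * A).charpoly + A.charpoly
      = (2 * X) * (A.charmatrix.updateRow i (Pi.single i 1)).det := by
  set B := Matrix.diagonal (fun j => if j = i then (-1 : ℝ) else 1) * A with hB
  have h1 : B.charmatrix = A.charmatrix.updateRow i (B.charmatrix i) := by
    ext1 a b
    by_cases h : a = i
    · subst h; simp
    · rw [Matrix.updateRow_ne h]
      simp [Matrix.charmatrix_apply, hB, Matrix.diagonal_mul, h]
  have h2 : A.charmatrix = A.charmatrix.updateRow i (A.charmatrix i) := by simp
  have h3 : B.charmatrix i + A.charmatrix i = (2 * X : ℝ[X]) • (Pi.single i 1 : Fin n → ℝ[X]) := by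
    ext1 j
    by_cases h : i = j
    · subst h
      simp [Matrix.charmatrix_apply_eq, hB, Matrix.diagonal_mul]
      ring
    · simp [Matrix.charmatrix_apply_ne _ _ _ h, hB, Matrix.diagonal_mul,
        Pi.single_eq_of_ne (Ne.symm h)]
  have h4 : A.charpoly = (A.charmatrix.updateRow i (A.charmatrix i)).det := by
    rw [← h2]; rfl
  have h5 : B.charpoly = (A.charmatrix.updateRow i (B.charmatrix i)).det := by
    rw [← h1]; rfl
  rw [h5, h4, ← Matrix.det_updateRow_add, h3, Matrix.det_updateRow_smul]

open Polynomial in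
theorem stmt_17 (n : ℕ) (A : Matrix (Fin n) (Fin n) ℝ) (lam : ℝ)
    (hlam : lam ≠ 0) (hmul : 1 ≤ (Matrix.charpoly A).rootMultiplicity lam) :
    ∃ i : Fin n,
      (Matrix.charpoly
          (Matrix.diagonal (fun j => if j = i then (-1 : ℝ) else 1) * A)).rootMultiplicity lam
        < (Matrix.charpoly A).rootMultiplicity lam := by
  by_contra! hcon
  have hp0 : A.charpoly ≠ 0 := A.charpoly_monic.ne_zero
  have hroot : A.charpoly.IsRoot lam := (rootMultiplicity_pos hp0).1 hmul
  have hder := derivative_rootMultiplicity_of_root hroot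
  have hdvd : (X - C lam) ^ (A.charpoly.rootMultiplicity lam) ∣
      (2 * X) * derivative A.charpoly := by
    rw [derivative_charpoly_rows, Finset.mul_sum]
    refine Finset.dvd_sum fun i _ => ?_
    rw [← charpoly_flip_add]
    exact dvd_add ((pow_dvd_pow _ (hcon i)).trans (pow_rootMultiplicity_dvd _ _))
      (pow_rootMultiplicity_dvd _ _)
  have hd0 : derivative A.charpoly ≠ 0 := by
    intro h
    have := natDegree_eq_zero_of_derivative_eq_zero h
    rw [eq_C_of_natDegree_eq_zero this] at hroot hp0
    simp at hroot hp0
    exact hp0 hroot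
  have h2x : (2 * X : ℝ[X]) ≠ 0 := by simp
  have hnz := mul_ne_zero h2x hd0
  have hle := (le_rootMultiplicity_iff hnz).2 hdvd
  have hz : rootMultiplicity lam (2 * X : ℝ[X]) = 0 := by
    apply rootMultiplicity_eq_zero
    simp [IsRoot, hlam]
  rw [rootMultiplicity_mul hnz, hder, hz] at hle
  omega
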